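/- (Uniform convergence of objectives, deterministic MFC.) Let 𝒳, 𝒰 be compact metric spaces, p continuous, r : 𝒫(𝒳) → ℝ continuous, γ ∈ (0,1), and Π an equi-Lipschitz class of policies with constant L_Π. With J^N(π) := E[ Σ_{t≥0} γ^t r(μ_t^N) ] the N-agent objective and J(Φ^{-1}(π)) := Σ_{t≥0} γ^t r(μ_t) the limiting MFC objective under the corresponding deterministic MFC policy, we have sup_{π ∈ Π} | J^N(π) − J(Φ^{-1}(π)) | → 0 as N → ∞. -/

import Mathlib

open MeasureTheory

/-- `W₁` distance on probability measures, via Kantorovich duality. -/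
noncomputable def W1 {X : Type*} [MeasurableSpace X] [PseudoMetricSpace X]
    (μ ν : ProbabilityMeasure X) : ℝ :=
  ⨆ f : {f : X → ℝ // LipschitzWith 1 f},
    |∫ x, (f : X → ℝ) x ∂(μ : Measure X) - ∫ x, (f : X → ℝ) x ∂(ν : Measure X)|

/-- Empirical measure of `N` points (an arbitrary probability measure if `N = 0`). -/
noncomputable def emp {X : Type*} [MeasurableSpace X] [Nonempty X] (N : ℕ) (x : Fin N → X) :
    ProbabilityMeasure X := by
  classical
  exact if hN : N = 0 then ⟨Measure.dirac (Classical.arbitrary X), inferInstance⟩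
  else ⟨(N : ENNReal)⁻¹ • ∑ i : Fin N, Measure.dirac (x i), by
    constructor
    simp only [Measure.smul_apply, Measure.coe_finset_sum, Finset.sum_apply,
      Measure.dirac_apply' _ MeasurableSet.univ, smul_eq_mul]
    simp only [Set.indicator_univ, Pi.one_apply, Finset.sum_const, Finset.card_univ,
      Fintype.card_fin, nsmul_eq_mul, mul_one]
    exact ENNReal.inv_mul_cancel (by exact_mod_cast hN) (by simp)⟩

/-- Law of the `N`-agent deterministic-MFC system at each time: agents start i.i.d. `μ0`,
sample actions from the shared policy `π` given own state and the empirical mean field, and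
transition through the kernel `p`. -/
noncomputable def mfcLawN {X U : Type*} [MeasurableSpace X] [Nonempty X] [MeasurableSpace U]
    (p : X → U → ProbabilityMeasure X → ProbabilityMeasure X)
    (π : ℕ → X → ProbabilityMeasure X → ProbabilityMeasure U)
    (μ0 : ProbabilityMeasure X) (N : ℕ) : ℕ → Measure (Fin N → X)
  | 0 => Measure.pi fun _ => (μ0 : Measure X)
  | t + 1 => (mfcLawN p π μ0 N t).bind fun x =>
      Measure.pi fun i => ((π t (x i) (emp N x) : Measure U)).bind
        fun u => (p (x i) u (emp N x) : Measure X)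

/-!
On a compact space the Kantorovich distance `W1` metrizes weak convergence, and by Arzelà–Ascoli it
is controlled, up to any `ε > 0`, by finitely many bounded continuous test functions. The variance
bound for independent, not necessarily identically distributed agents therefore gives a law of large
numbers in `W1` that is uniform in the laws of the agents: after one transition, the empirical
measure of `N` agents is close in mean to its conditional expectation, which is the mean-field step
applied to the current empirical measure. Equicontinuity of the policies makes the mean-field steps
equicontinuous, so the error propagates by induction over time; the discounted sums then converge by
dominated convergence. Running this along an arbitrary filter on pairs of an agent number and a
policy turns uniformity over the class into plain convergence.
-/

namespace MeanField

open Filter Topology ProbabilityTheory BoundedContinuousFunction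

open scoped NNReal

lemma integrable_of_continuous {A : Type*} [TopologicalSpace A] [CompactSpace A]
    [MeasurableSpace A] [OpensMeasurableSpace A] (m : Measure A) [IsFiniteMeasureOnCompacts m]
    {f : A → ℝ} (hf : Continuous f) : Integrable f m :=
  hf.integrable_of_hasCompactSupport (HasCompactSupport.of_compactSpace f)

lemma integral_sub_integral_le_of_forall_sub_le {Y : Type*} [TopologicalSpace Y]
    [CompactSpace Y] [MeasurableSpace Y] [OpensMeasurableSpace Y] (m m' : Measure Y)
    [IsProbabilityMeasure m] [IsProbabilityMeasure m'] {f g : Y → ℝ} (hf : Continuous f)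
    (hg : Continuous g) {c : ℝ} (h : ∀ y y', f y - g y' ≤ c) :
    ∫ y, f y ∂m - ∫ y, g y ∂m' ≤ c := by
  have hf' (y' : Y) : ∫ y, f y ∂m ≤ g y' + c := by
    simpa using integral_mono (integrable_of_continuous m hf) (integrable_const (g y' + c))
      fun y ↦ by linarith [h y y']
  have hg' := integral_mono (integrable_const (∫ y, f y ∂m - c)) (integrable_of_continuous m' hg)
    fun y' ↦ by linarith [hf' y']
  simp only [integral_const, probReal_univ, one_smul] at hg'
  linarith

lemma exists_lipschitzWith_between {Y : Type*} [PseudoMetricSpace Y] [Nonempty Y] {f g : Y → ℝ}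
    {C : ℝ≥0} (h : ∀ y y', f y ≤ g y' + C * dist y y') :
    ∃ k : Y → ℝ, LipschitzWith C k ∧ f ≤ k ∧ k ≤ g := by
  have hbdd (y : Y) : BddBelow (Set.range fun y' ↦ g y' + C * dist y y') :=
    ⟨f y, Set.forall_mem_range.2 (h y)⟩
  refine ⟨fun y ↦ ⨅ y', (g y' + C * dist y y'), LipschitzWith.of_le_add_mul C fun y z ↦ ?_,
    fun y ↦ le_ciInf (h y), fun y ↦ by simpa using ciInf_le (hbdd y) y⟩
  rw [← sub_le_iff_le_add]
  refine le_ciInf fun y' ↦ ?_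
  have htri := mul_le_mul_of_nonneg_left (dist_triangle y z y') C.coe_nonneg
  linarith [ciInf_le (hbdd y) y']

lemma uniformEquicontinuous_const_of_continuous (ι : Type*) {α β : Type*} [UniformSpace α]
    [CompactSpace α] [UniformSpace β] {f : α → β} (hf : Continuous f) :
    UniformEquicontinuous fun _ : ι ↦ f := fun _ hV ↦
  ((CompactSpace.uniformContinuous_of_continuous hf).eventually hV).mono fun _ h _ ↦ h

lemma dist_le_diam_univ {α : Type*} [PseudoMetricSpace α] [BoundedSpace α] (a b : α) :
    dist a b ≤ Metric.diam (Set.univ : Set α) :=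
  Metric.dist_le_diam_of_mem (Bornology.IsBounded.all _) (Set.mem_univ a) (Set.mem_univ b)

lemma exists_affine_modulus {ι α β : Type*} [PseudoMetricSpace α] [PseudoMetricSpace β]
    {F : ι → α → β} (hF : UniformEquicontinuous F) {D : ℝ}
    (hD : ∀ i a b, dist (F i a) (F i b) ≤ D) {ε : ℝ} (hε : 0 < ε) :
    ∃ C : ℝ≥0, ∀ i a b, dist (F i a) (F i b) ≤ ε + C * dist a b := by
  obtain ⟨δ, hδ, hFδ⟩ := Metric.uniformEquicontinuous_iff.1 hF ε hε
  refine ⟨(D / δ).toNNReal, fun i a b ↦ ?_⟩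
  obtain hab | hab := lt_or_ge (dist a b) δ
  · exact (hFδ a b hab i).le.trans (le_add_of_nonneg_right (by positivity))
  · have hDC : D ≤ (D / δ).toNNReal * δ := (div_le_iff₀ hδ).1 (Real.le_coe_toNNReal _)
    calc dist (F i a) (F i b) ≤ (D / δ).toNNReal * δ := (hD i a b).trans hDC
      _ ≤ (D / δ).toNNReal * dist a b := by gcongr
      _ ≤ ε + (D / δ).toNNReal * dist a b := le_add_of_nonneg_left hε.le

lemma abs_integral_sub_le_two_mul_dist_add {Y : Type*} [TopologicalSpace Y] [MeasurableSpace Y]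
    [OpensMeasurableSpace Y] (m m' : Measure Y) [IsProbabilityMeasure m] [IsProbabilityMeasure m']
    (f g : Y →ᵇ ℝ) :
    |∫ y, f y ∂m - ∫ y, f y ∂m'| ≤ 2 * dist f g + |∫ y, g y ∂m - ∫ y, g y ∂m'| := by
  have hfg (μ : Measure Y) [IsProbabilityMeasure μ] :
      |∫ y, f y ∂μ - ∫ y, g y ∂μ| ≤ dist f g := by
    rw [← integral_sub (f.integrable _) (g.integrable _)]
    simpa using norm_integral_le_of_norm_le_const (μ := μ) (f := fun y ↦ f y - g y)
      (Eventually.of_forall fun y ↦ f.dist_coe_le_dist (g := g) y)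
  have hm := abs_le.1 (hfg m)
  have hm' := abs_le.1 (hfg m')
  have hg := abs_le.1 (le_refl |∫ y, g y ∂m - ∫ y, g y ∂m'|)
  exact abs_le.2 ⟨by linarith, by linarith⟩

lemma totallyBounded_setOf_lipschitzWith {Y : Type*} [PseudoMetricSpace Y] [CompactSpace Y]
    (C : ℝ≥0) {s : Set ℝ} (hs : IsCompact s) :
    TotallyBounded {f : Y →ᵇ ℝ | LipschitzWith C f ∧ ∀ y, f y ∈ s} :=
  (BoundedContinuousFunction.arzela_ascoli s hs _ (fun _ y hf ↦ hf.2 y)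
    (LipschitzWith.uniformEquicontinuous _ C fun f ↦ f.2.1).equicontinuous).totallyBounded.subset
      subset_closure

section Wasserstein

variable {X : Type*} [PseudoMetricSpace X] [MeasurableSpace X]

lemma W1_le {μ ν : ProbabilityMeasure X} {w : ℝ}
    (h : ∀ f : X → ℝ, LipschitzWith 1 f →
      |∫ x, f x ∂(μ : Measure X) - ∫ x, f x ∂(ν : Measure X)| ≤ w) : W1 μ ν ≤ w :=
  have : Nonempty {f : X → ℝ // LipschitzWith 1 f} := ⟨fun _ ↦ 0, LipschitzWith.const' 0⟩
  ciSup_le fun f ↦ h f f.2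

lemma W1_nonneg (μ ν : ProbabilityMeasure X) : 0 ≤ W1 μ ν :=
  Real.iSup_nonneg fun _ ↦ abs_nonneg _

lemma W1_self (μ : ProbabilityMeasure X) : W1 μ μ = 0 := by
  simp only [W1, sub_self, abs_zero, Real.iSup_const_zero]

lemma W1_comm (μ ν : ProbabilityMeasure X) : W1 μ ν = W1 ν μ := by
  simp only [W1, abs_sub_comm]

lemma W1_lt_of_dist_lt_of_W1_lt {U : Type*} [PseudoMetricSpace U] [MeasurableSpace U] {L : ℝ}
    (hL : 0 < L) {ε : ℝ} {Q : X → ProbabilityMeasure X → ProbabilityMeasure U} {x x' : X}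
    {μ μ' : ProbabilityMeasure X} (hQ : ∀ g : U → ℝ, LipschitzWith 1 g →
      |∫ u, g u ∂(Q x μ : Measure U) - ∫ u, g u ∂(Q x' μ' : Measure U)| ≤
        L * (dist x x' + W1 μ μ'))
    (hx : dist x x' < ε / (2 * L)) (hμ : W1 μ μ' < ε / (2 * L)) : W1 (Q x μ) (Q x' μ') < ε :=
  calc W1 (Q x μ) (Q x' μ') ≤ L * (dist x x' + W1 μ μ') := W1_le hQ
    _ < L * (ε / (2 * L) + ε / (2 * L)) := by gcongr
    _ = ε := by
      field_simp
      norm_num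

variable [CompactSpace X] [OpensMeasurableSpace X]

lemma abs_integral_sub_le_diam (μ ν : ProbabilityMeasure X) {f : X → ℝ} (hf : LipschitzWith 1 f) :
    |∫ x, f x ∂(μ : Measure X) - ∫ x, f x ∂(ν : Measure X)| ≤ Metric.diam (Set.univ : Set X) := by
  have hosc (x y : X) : f x - f y ≤ Metric.diam (Set.univ : Set X) :=
    calc f x - f y ≤ dist (f x) (f y) := le_abs_self _
      _ ≤ dist x y := by simpa using hf.dist_le_mul x y
      _ ≤ Metric.diam Set.univ := dist_le_diam_univ x y
  exact abs_sub_le_iff.2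
    ⟨integral_sub_integral_le_of_forall_sub_le μ ν hf.continuous hf.continuous hosc,
      integral_sub_integral_le_of_forall_sub_le ν μ hf.continuous hf.continuous hosc⟩

lemma abs_integral_sub_le_W1 (μ ν : ProbabilityMeasure X) {f : X → ℝ} (hf : LipschitzWith 1 f) :
    |∫ x, f x ∂(μ : Measure X) - ∫ x, f x ∂(ν : Measure X)| ≤ W1 μ ν :=
  le_ciSup (f := fun f : {f : X → ℝ // LipschitzWith 1 f} ↦
      |∫ x, f.1 x ∂(μ : Measure X) - ∫ x, f.1 x ∂(ν : Measure X)|)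
    ⟨_, Set.forall_mem_range.2 fun f ↦ abs_integral_sub_le_diam μ ν f.2⟩ ⟨f, hf⟩

lemma W1_triangle (μ ν ξ : ProbabilityMeasure X) : W1 μ ξ ≤ W1 μ ν + W1 ν ξ :=
  W1_le fun _ hf ↦ (abs_sub_le _ _ _).trans <|
    add_le_add (abs_integral_sub_le_W1 μ ν hf) (abs_integral_sub_le_W1 ν ξ hf)

lemma abs_integral_sub_le_mul_W1 (μ ν : ProbabilityMeasure X) {C : ℝ≥0} {f : X → ℝ}
    (hf : LipschitzWith C f) :
    |∫ x, f x ∂(μ : Measure X) - ∫ x, f x ∂(ν : Measure X)| ≤ C * W1 μ ν := by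
  obtain rfl | hC := eq_or_ne C 0
  · obtain ⟨x₀⟩ := μ.nonempty
    have hconst (x : X) : f x = f x₀ := by simpa using hf.dist_le_mul x x₀
    simp [hconst]
  · have hscaled : LipschitzWith 1 fun x ↦ (C : ℝ)⁻¹ * f x := by
      simpa [hC, Function.comp_def] using (lipschitzWith_smul (C : ℝ)⁻¹).comp hf
    have h := abs_integral_sub_le_W1 μ ν hscaled
    rwa [integral_const_mul, integral_const_mul, ← mul_sub, abs_mul, abs_inv, NNReal.abs_eq,
      inv_mul_le_iff₀ (by positivity)] at h

lemma integral_sub_integral_le_add_mul_W1 (μ ν : ProbabilityMeasure X) {f g : X → ℝ}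
    (hf : Continuous f) (hg : Continuous g) {ε : ℝ} {C : ℝ≥0}
    (h : ∀ x y, f x - g y ≤ ε + C * dist x y) :
    ∫ x, f x ∂(μ : Measure X) - ∫ x, g x ∂(ν : Measure X) ≤ ε + C * W1 μ ν := by
  have : Nonempty X := μ.nonempty
  obtain ⟨k, hk, hfk, hkg⟩ := exists_lipschitzWith_between (f := fun x ↦ f x - ε) (g := g)
    (C := C) fun x y ↦ by linarith [h x y]
  have hμ := integral_mono
    ((integrable_of_continuous (μ : Measure X) hf).sub (integrable_const ε))
    (integrable_of_continuous (μ : Measure X) hk.continuous) hfk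
  have hν := integral_mono (integrable_of_continuous (ν : Measure X) hk.continuous)
    (integrable_of_continuous (ν : Measure X) hg) hkg
  rw [integral_sub' (integrable_of_continuous _ hf) (integrable_const _), integral_const,
    probReal_univ, one_smul] at hμ
  linarith [(le_abs_self _).trans (abs_integral_sub_le_mul_W1 μ ν hk)]

lemma exists_finset_W1_le (X : Type*) [PseudoMetricSpace X] [CompactSpace X]
    [MeasurableSpace X] [OpensMeasurableSpace X] {ε : ℝ} (hε : 0 < ε) :
    ∃ F : Finset (X →ᵇ ℝ), ∀ μ ν : ProbabilityMeasure X,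
      W1 μ ν ≤ ε + ∑ g ∈ F, |∫ x, g x ∂(μ : Measure X) - ∫ x, g x ∂(ν : Measure X)| := by
  set D := Metric.diam (Set.univ : Set X)
  obtain ⟨T, hT, hcover⟩ := Metric.totallyBounded_iff.1
    (totallyBounded_setOf_lipschitzWith (Y := X) 1 (isCompact_Icc (a := -D) (b := D)))
    (ε / 2) (half_pos hε)
  refine ⟨hT.toFinset, fun μ ν ↦ W1_le fun f hf ↦ ?_⟩
  obtain ⟨x₀⟩ := μ.nonempty
  let f₀ : X →ᵇ ℝ := BoundedContinuousFunction.mkOfCompact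
    ⟨fun x ↦ f x - f x₀, hf.continuous.sub continuous_const⟩
  have hf₀_lip : LipschitzWith 1 f₀ :=
    LipschitzWith.of_dist_le_mul fun x y ↦ by simpa [f₀] using hf.dist_le_mul x y
  have hf₀_mem (x : X) : f₀ x ∈ Set.Icc (-D) D := abs_le.1 <|
    calc |f₀ x| = dist (f x) (f x₀) := rfl
      _ ≤ dist x x₀ := by simpa using hf.dist_le_mul x x₀
      _ ≤ D := dist_le_diam_univ x x₀
  obtain ⟨g, hgT, hfg⟩ := Set.mem_iUnion₂.1 (hcover ⟨hf₀_lip, hf₀_mem⟩)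
  have hf₀_integral (m : ProbabilityMeasure X) :
      ∫ x, f₀ x ∂(m : Measure X) = ∫ x, f x ∂(m : Measure X) - f x₀ := by
    simpa [f₀] using integral_sub (integrable_of_continuous (m : Measure X) hf.continuous)
      (integrable_const (f x₀))
  calc |∫ x, f x ∂(μ : Measure X) - ∫ x, f x ∂(ν : Measure X)|
      = |∫ x, f₀ x ∂(μ : Measure X) - ∫ x, f₀ x ∂(ν : Measure X)| := by
        rw [hf₀_integral, hf₀_integral, sub_sub_sub_cancel_right]
    _ ≤ 2 * dist f₀ g + |∫ x, g x ∂(μ : Measure X) - ∫ x, g x ∂(ν : Measure X)| :=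
        abs_integral_sub_le_two_mul_dist_add _ _ f₀ g
    _ ≤ ε + ∑ g ∈ hT.toFinset, |∫ x, g x ∂(μ : Measure X) - ∫ x, g x ∂(ν : Measure X)| :=
        add_le_add (by linarith [Metric.mem_ball.1 hfg]) <| Finset.single_le_sum
          (f := fun g : X →ᵇ ℝ ↦ |∫ x, g x ∂(μ : Measure X) - ∫ x, g x ∂(ν : Measure X)|)
          (fun _ _ ↦ abs_nonneg _) (hT.mem_toFinset.2 hgT)

lemma tendsto_W1_nhds (μ : ProbabilityMeasure X) : Tendsto (fun ν ↦ W1 ν μ) (𝓝 μ) (𝓝 0) := by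
  refine (nhds_basis_Ioo_pos (0 : ℝ)).tendsto_right_iff.2 fun ε hε ↦ ?_
  obtain ⟨F, hF⟩ := exists_finset_W1_le X (half_pos hε)
  have hsum : Tendsto
      (fun ν : ProbabilityMeasure X ↦
        ∑ g ∈ F, |∫ x, g x ∂(ν : Measure X) - ∫ x, g x ∂(μ : Measure X)|) (𝓝 μ) (𝓝 0) := by
    have hcont : Continuous fun ν : ProbabilityMeasure X ↦
        ∑ g ∈ F, |∫ x, g x ∂(ν : Measure X) - ∫ x, g x ∂(μ : Measure X)| :=
      continuous_finsetSum _ fun g _ ↦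
        ((ProbabilityMeasure.continuous_integral_boundedContinuousFunction g).sub
          continuous_const).abs
    simpa using hcont.tendsto μ
  filter_upwards [hsum.eventually_lt_const (half_pos hε)] with ν hν
  exact ⟨by linarith [W1_nonneg ν μ], by linarith [hF ν μ]⟩

lemma tendsto_of_tendsto_W1 {ι : Type*} {l : Filter ι} {ν : ι → ProbabilityMeasure X}
    {μ : ProbabilityMeasure X} (h : Tendsto (fun i ↦ W1 (ν i) μ) l (𝓝 0)) :
    Tendsto ν l (𝓝 μ) := by
  refine ProbabilityMeasure.tendsto_iff_forall_integral_tendsto.2 fun f ↦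
    Metric.tendsto_nhds.2 fun ε hε ↦ ?_
  obtain ⟨C, hC⟩ := exists_affine_modulus
    (uniformEquicontinuous_const_of_continuous Unit f.continuous) (fun _ ↦ f.dist_le_two_norm)
    (half_pos hε)
  have hCW : Tendsto (fun i ↦ C * W1 (ν i) μ) l (𝓝 0) := by simpa using h.const_mul (C : ℝ)
  filter_upwards [hCW.eventually_lt_const (half_pos hε)] with i hi
  have hosc (x y : X) : f x - f y ≤ ε / 2 + C * dist x y := (le_abs_self _).trans (hC () x y)
  have hνμ := integral_sub_integral_le_add_mul_W1 (ν i) μ f.continuous f.continuous hosc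
  have hμν := integral_sub_integral_le_add_mul_W1 μ (ν i) f.continuous f.continuous hosc
  rw [W1_comm] at hμν
  exact abs_sub_lt_iff.2 ⟨by linarith, by linarith⟩

lemma nhds_eq_comap_W1 (μ : ProbabilityMeasure X) : 𝓝 μ = comap (fun ν ↦ W1 ν μ) (𝓝 0) :=
  le_antisymm (tendsto_W1_nhds μ).le_comap (tendsto_of_tendsto_W1 (ν := id) tendsto_comap)

/-- The Kantorovich distance `W1` as a pseudometric on the probability measures of a compact space,
with its topology taken to be the topology of weak convergence, which it metrizes. -/
noncomputable abbrev wassersteinPseudoMetric : PseudoMetricSpace (ProbabilityMeasure X) :=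
  let d : PseudoMetricSpace (ProbabilityMeasure X) :=
    { dist := W1
      dist_self := W1_self
      dist_comm := W1_comm
      dist_triangle := W1_triangle }
  d.replaceTopology <| TopologicalSpace.ext_nhds fun μ ↦
    (nhds_eq_comap_W1 μ).trans (@nhds_comap_dist _ d μ)

end Wasserstein

attribute [local instance] wassersteinPseudoMetric

section WassersteinMetric

variable {X : Type*} [PseudoMetricSpace X] [CompactSpace X] [MeasurableSpace X]
  [OpensMeasurableSpace X]

lemma continuous_W1_const_right {A : Type*} [TopologicalSpace A] {F : A → ProbabilityMeasure X}
    (hF : Continuous F) (ν : ProbabilityMeasure X) : Continuous fun a ↦ W1 (F a) ν :=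
  have h : Continuous fun a ↦ dist (F a) ν := hF.dist continuous_const
  h

lemma uniformEquicontinuous_of_forall_W1_lt {ι U : Type*} [PseudoMetricSpace U] [CompactSpace U]
    [MeasurableSpace U] [OpensMeasurableSpace U]
    {Q : ι → X × ProbabilityMeasure X → ProbabilityMeasure U}
    (hQ : ∀ ε > 0, ∃ δ > 0, ∀ i x x' μ μ', dist x x' < δ → W1 μ μ' < δ →
      W1 (Q i (x, μ)) (Q i (x', μ')) < ε) : UniformEquicontinuous Q := by
  refine Metric.uniformEquicontinuous_iff.2 fun ε hε ↦ ?_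
  obtain ⟨δ, hδ, hQδ⟩ := hQ ε hε
  exact ⟨δ, hδ, fun z z' hzz' i ↦ hQδ i z.1 z'.1 z.2 z'.2
    ((le_max_left _ _).trans_lt hzz') ((le_max_right _ _).trans_lt hzz')⟩

end WassersteinMetric

section Mixture

variable {A B : Type*} [TopologicalSpace A] [MeasurableSpace A] [OpensMeasurableSpace A]
  [TopologicalSpace B] [MeasurableSpace B] [BorelSpace B] [HasOuterApproxClosed B]

lemma measurable_coe_of_continuous {κ : A → ProbabilityMeasure B} (hκ : Continuous κ) :
    Measurable fun a ↦ (κ a : Measure B) := by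
  refine Measurable.measure_of_isPiSystem_of_isProbabilityMeasure
    (BorelSpace.measurable_eq.trans borel_eq_generateFrom_isClosed) isPiSystem_isClosed
    fun s (hs : IsClosed s) ↦ ?_
  refine measurable_of_tendsto_metrizable (f := fun n a ↦ ∫⁻ b, hs.apprSeq n b ∂(κ a : Measure B))
    (fun n ↦ ((ProbabilityMeasure.continuous_iff_forall_continuous_lintegral.1 hκ) _).measurable)
    (tendsto_pi_nhds.2 fun a ↦ HasOuterApproxClosed.tendsto_lintegral_apprSeq hs _)

/-- The mixture of the probability measures `κ a`, with `a` distributed according to `m`. -/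
noncomputable def mix (m : ProbabilityMeasure A) (κ : C(A, ProbabilityMeasure B)) :
    ProbabilityMeasure B :=
  ⟨(m : Measure A).bind fun a ↦ (κ a : Measure B),
    isProbabilityMeasure_bind (measurable_coe_of_continuous κ.continuous).aemeasurable
      (Eventually.of_forall fun _ ↦ inferInstance)⟩

lemma integral_mix [CompactSpace B] (m : ProbabilityMeasure A)
    (κ : C(A, ProbabilityMeasure B)) {f : B → ℝ} (hf : Continuous f) :
    ∫ b, f b ∂(mix m κ : Measure B) = ∫ a, ∫ b, f b ∂(κ a : Measure B) ∂(m : Measure A) := by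
  let η : Kernel A B := ⟨fun a ↦ (κ a : Measure B), measurable_coe_of_continuous κ.continuous⟩
  have hmix : (mix m κ : Measure B) = (η ∘ₖ Kernel.const Unit (m : Measure A)) () := by
    rw [Kernel.comp_apply]
    rfl
  rw [hmix, Kernel.integral_comp (hmix ▸ integrable_of_continuous (mix m κ : Measure B) hf)]
  rfl

end Mixture

section UniformMixture

variable {Y B : Type*} [PseudoMetricSpace Y] [CompactSpace Y] [MeasurableSpace Y]
  [OpensMeasurableSpace Y] [PseudoMetricSpace B] [CompactSpace B] [MeasurableSpace B] [BorelSpace B]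

lemma W1_mix_le (m m' : ProbabilityMeasure Y) (κ κ' : C(Y, ProbabilityMeasure B)) {ε : ℝ}
    {C : ℝ≥0} (h : ∀ y y', W1 (κ y) (κ' y') ≤ ε + C * dist y y') :
    W1 (mix m κ) (mix m' κ') ≤ ε + C * W1 m m' := by
  have hcont (η : C(Y, ProbabilityMeasure B)) {f : B → ℝ} (hf : Continuous f) :
      Continuous fun y ↦ ∫ b, f b ∂(η y : Measure B) :=
    (ProbabilityMeasure.continuous_integral_continuousMap (⟨f, hf⟩ : C(B, ℝ))).comp η.continuous
  refine W1_le fun f hf ↦ ?_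
  have hosc (y y' : Y) : |∫ b, f b ∂(κ y : Measure B) - ∫ b, f b ∂(κ' y' : Measure B)| ≤
      ε + C * dist y y' := (abs_integral_sub_le_W1 _ _ hf).trans (h y y')
  rw [integral_mix _ _ hf.continuous, integral_mix _ _ hf.continuous]
  refine abs_sub_le_iff.2 ⟨?_, ?_⟩
  · exact integral_sub_integral_le_add_mul_W1 m m' (hcont κ hf.continuous)
      (hcont κ' hf.continuous) fun y y' ↦ (abs_sub_le_iff.1 (hosc y y')).1
  · rw [W1_comm]
    exact integral_sub_integral_le_add_mul_W1 m' m (hcont κ' hf.continuous)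
      (hcont κ hf.continuous) fun y y' ↦ dist_comm y y' ▸ (abs_sub_le_iff.1 (hosc y' y)).2

lemma uniformEquicontinuous_mix {ι α : Type*} [PseudoMetricSpace α]
    {m : ι → α → ProbabilityMeasure Y} (hm : UniformEquicontinuous m)
    {κ : ι → α → C(Y, ProbabilityMeasure B)}
    (hκ : UniformEquicontinuous fun i (z : α × Y) ↦ κ i z.1 z.2) :
    UniformEquicontinuous fun i a ↦ mix (m i a) (κ i a) := by
  refine Metric.uniformEquicontinuous_iff.2 fun ε hε ↦ ?_
  obtain ⟨C, hC⟩ := exists_affine_modulus hκ (D := Metric.diam (Set.univ : Set B))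
    (fun _ _ _ ↦ W1_le fun _ ↦ abs_integral_sub_le_diam _ _) (half_pos hε)
  have hη : 0 < ε / (4 * (C + 1)) := by positivity
  obtain ⟨δ, hδ, hmδ⟩ := Metric.uniformEquicontinuous_iff.1 hm _ hη
  refine ⟨min δ (ε / (4 * (C + 1))), lt_min hδ hη, fun a a' haa' i ↦ ?_⟩
  have hκ_le (y y' : Y) : W1 (κ i a y) (κ i a' y') ≤ (ε / 2 + C * dist a a') + C * dist y y' := by
    rw [add_assoc, ← mul_add]
    refine (hC i (a, y) (a', y')).trans ?_
    gcongr
    exact max_le_add_of_nonneg dist_nonneg dist_nonneg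
  have hCη : 4 * (C * (ε / (4 * (C + 1)))) < ε := by
    rw [← mul_assoc, ← mul_div_assoc, div_lt_iff₀ (by positivity)]
    nlinarith
  calc dist (mix (m i a) (κ i a)) (mix (m i a') (κ i a'))
      ≤ (ε / 2 + C * dist a a') + C * dist (m i a) (m i a') := W1_mix_le _ _ _ _ hκ_le
    _ ≤ (ε / 2 + C * (ε / (4 * (C + 1)))) + C * (ε / (4 * (C + 1))) := by
        gcongr
        exacts [haa'.le.trans (min_le_right _ _), (hmδ a a' (haa'.trans_le (min_le_left _ _)) i).le]
    _ < ε := by linarith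

/-- The map `a ↦ mix (m a) (κ (a, ·))`: mixtures whose weights and components both depend
continuously on a parameter in a compact space. -/
noncomputable def mixMap {α : Type*} [PseudoMetricSpace α] [CompactSpace α]
    (m : C(α, ProbabilityMeasure Y)) (κ : C(α × Y, ProbabilityMeasure B)) :
    C(α, ProbabilityMeasure B) where
  toFun a := mix (m a) (κ.curry a)
  continuous_toFun := (uniformEquicontinuous_mix (ι := Unit) (m := fun _ ↦ m)
    (κ := fun _ ↦ κ.curry) (uniformEquicontinuous_const_of_continuous Unit m.continuous)
    (uniformEquicontinuous_const_of_continuous Unit κ.continuous)).equicontinuous.continuous ()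

lemma uniformEquicontinuous_mixMap {ι α : Type*} [PseudoMetricSpace α] [CompactSpace α]
    {m : ι → C(α, ProbabilityMeasure Y)} {κ : ι → C(α × Y, ProbabilityMeasure B)}
    (hm : UniformEquicontinuous fun i ↦ ⇑(m i)) (hκ : UniformEquicontinuous fun i ↦ ⇑(κ i)) :
    UniformEquicontinuous fun i ↦ ⇑(mixMap (m i) (κ i)) :=
  uniformEquicontinuous_mix hm hκ

end UniformMixture

section LawOfLargeNumbers

lemma integral_abs_sub_integral_le_sqrt_variance {Ω : Type*} [MeasurableSpace Ω] {P : Measure Ω}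
    [IsProbabilityMeasure P] {Z : Ω → ℝ} (hZ : MemLp Z 2 P) :
    ∫ ω, |Z ω - ∫ ω', Z ω' ∂P| ∂P ≤ √Var[Z; P] := by
  have hdev : MemLp (fun ω ↦ |Z ω - ∫ ω', Z ω' ∂P|) 2 P := (hZ.sub (memLp_const _)).abs
  have hvar := variance_nonneg (fun ω ↦ |Z ω - ∫ ω', Z ω' ∂P|) P
  rw [variance_eq_sub hdev] at hvar
  refine Real.le_sqrt_of_sq_le ?_
  rw [variance_eq_integral hZ.aemeasurable]
  simpa only [Pi.pow_apply, sq_abs, sub_nonneg] using hvar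

lemma integral_abs_sum_sub_le {ι Ω : Type*} [Fintype ι] [MeasurableSpace Ω] (κ : ι → Measure Ω)
    [∀ i, IsProbabilityMeasure (κ i)] {f : Ω → ℝ} (hf : Measurable f) {M : ℝ}
    (hM : ∀ x, |f x| ≤ M) :
    ∫ y, |∑ i, f (y i) - ∑ i, ∫ x, f x ∂κ i| ∂Measure.pi κ ≤ √(Fintype.card ι) * M := by
  obtain hι | ⟨⟨i₀⟩⟩ := isEmpty_or_nonempty ι
  · simp
  obtain ⟨x₀⟩ := nonempty_of_isProbabilityMeasure (κ i₀)
  have hM₀ : 0 ≤ M := (abs_nonneg _).trans (hM x₀)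
  have hfL (i : ι) : MemLp f 2 (κ i) :=
    MemLp.of_bound hf.aestronglyMeasurable M (Eventually.of_forall hM)
  have hfL_eval (i : ι) : MemLp (fun y : ι → Ω ↦ f (y i)) 2 (Measure.pi κ) :=
    (hfL i).comp_measurePreserving (measurePreserving_eval κ i)
  have hmean : ∫ y, ∑ i, f (y i) ∂Measure.pi κ = ∑ i, ∫ x, f x ∂κ i := by
    rw [integral_finsetSum _ fun i _ ↦ (hfL_eval i).integrable one_le_two]
    exact Finset.sum_congr rfl fun i _ ↦ integral_comp_eval (hfL i).1
  have hvar_le (i : ι) : Var[f; κ i] ≤ M ^ 2 := by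
    simpa using variance_le_sq_of_bounded
      (Eventually.of_forall fun x ↦ abs_le.1 (hM x)) hf.aemeasurable
  have hvar : Var[fun y ↦ ∑ i, f (y i); Measure.pi κ] ≤ Fintype.card ι * M ^ 2 := by
    have hsum : (fun y : ι → Ω ↦ ∑ i, f (y i)) = ∑ i, fun y ↦ f (y i) := by
      ext y
      simp
    rw [hsum, variance_sum_pi hfL]
    simpa using Finset.sum_le_sum fun i (_ : i ∈ Finset.univ) ↦ hvar_le i
  rw [← hmean]
  refine (integral_abs_sub_integral_le_sqrt_variance
    (memLp_finsetSum _ fun i _ ↦ hfL_eval i)).trans ?_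
  calc √Var[fun y ↦ ∑ i, f (y i); Measure.pi κ] ≤ √(Fintype.card ι * M ^ 2) :=
        Real.sqrt_le_sqrt hvar
    _ = √(Fintype.card ι) * M := by rw [Real.sqrt_mul (Nat.cast_nonneg _), Real.sqrt_sq hM₀]

end LawOfLargeNumbers

section EmpiricalMeasure

variable {X : Type*} [TopologicalSpace X] [MeasurableSpace X] [OpensMeasurableSpace X] [Nonempty X]

lemma integral_emp {N : ℕ} (hN : N ≠ 0) (y : Fin N → X) (f : X →ᵇ ℝ) :
    ∫ x, f x ∂(emp N y : Measure X) = (N : ℝ)⁻¹ * ∑ i, f (y i) := by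
  have hemp : (emp N y : Measure X) = (N : ENNReal)⁻¹ • ∑ i, Measure.dirac (y i) :=
    congrArg Subtype.val (dif_neg hN)
  have hdirac (i : Fin N) : ∫ x, f x ∂Measure.dirac (y i) = f (y i) :=
    integral_dirac' f (y i) f.continuous.measurable.stronglyMeasurable
  rw [hemp, integral_smul_measure, integral_finsetSum_measure fun i _ ↦ f.integrable _]
  simp [hdirac]

lemma continuous_emp (N : ℕ) : Continuous fun y : Fin N → X ↦ emp N y := by
  obtain rfl | hN := eq_or_ne N 0
  · exact continuous_of_const fun y y' ↦ by rw [Subsingleton.elim y y']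
  · refine ProbabilityMeasure.continuous_iff_forall_continuous_integral.2 fun f ↦ ?_
    simp only [integral_emp hN]
    fun_prop

lemma integral_abs_integral_emp_sub_le {N : ℕ} (κ : Fin N → ProbabilityMeasure X) (hN : N ≠ 0)
    (ν : ProbabilityMeasure X) (f : X →ᵇ ℝ) (hν : ∫ x, f x ∂(ν : Measure X) =
      (N : ℝ)⁻¹ * ∑ i, ∫ x, f x ∂(κ i : Measure X)) :
    ∫ y, |∫ x, f x ∂(emp N y : Measure X) - ∫ x, f x ∂(ν : Measure X)|
      ∂Measure.pi (fun i ↦ (κ i : Measure X)) ≤ ‖f‖ / √N := by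
  have hsum := integral_abs_sum_sub_le (fun i ↦ (κ i : Measure X)) f.continuous.measurable
    f.norm_coe_le_norm
  simp only [integral_emp hN, hν, ← mul_sub, abs_mul, abs_inv, Nat.abs_cast, integral_const_mul]
  rw [Fintype.card_fin] at hsum
  calc _ ≤ (N : ℝ)⁻¹ * (√N * ‖f‖) := by gcongr
    _ = ‖f‖ / √N := by
      rw [← mul_assoc, inv_mul_eq_div, Real.sqrt_div_self', one_div_mul_eq_div]

end EmpiricalMeasure

section EmpiricalLaw

variable {X : Type*} [PseudoMetricSpace X] [CompactSpace X] [MeasurableSpace X]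
  [OpensMeasurableSpace X] [Nonempty X]

lemma eventually_integral_W1_emp_le {ε : ℝ} (hε : 0 < ε) :
    ∀ᶠ N : ℕ in atTop, ∀ (κ : Fin N → ProbabilityMeasure X) (ν : ProbabilityMeasure X),
      (∀ f : X →ᵇ ℝ, ∫ x, f x ∂(ν : Measure X) =
        (N : ℝ)⁻¹ * ∑ i, ∫ x, f x ∂(κ i : Measure X)) →
      ∫ y, W1 (emp N y) ν ∂(Measure.pi fun i ↦ (κ i : Measure X)) ≤ ε := by
  obtain ⟨F, hF⟩ := exists_finset_W1_le X (half_pos hε)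
  have hlim : Tendsto (fun N : ℕ ↦ ∑ f ∈ F, ‖f‖ / √(N : ℝ)) atTop (𝓝 0) := by
    simpa using tendsto_finsetSum F fun f _ ↦ (tendsto_const_nhds (x := ‖f‖)).div_atTop
      (Real.tendsto_sqrt_atTop.comp tendsto_natCast_atTop_atTop)
  filter_upwards [hlim.eventually_lt_const (half_pos hε), eventually_ne_atTop 0]
    with N hN hN₀ κ ν hν
  have hint (f : X →ᵇ ℝ) :
      Integrable (fun y ↦ |∫ x, f x ∂(emp N y : Measure X) - ∫ x, f x ∂(ν : Measure X)|)
        (Measure.pi fun i ↦ (κ i : Measure X)) :=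
    integrable_of_continuous _
      (((ProbabilityMeasure.continuous_integral_boundedContinuousFunction f).comp
        (continuous_emp N)).sub continuous_const).abs
  have hintW : Integrable (fun y ↦ W1 (emp N y) ν) (Measure.pi fun i ↦ (κ i : Measure X)) :=
    integrable_of_continuous _ (continuous_W1_const_right (continuous_emp N) ν)
  calc ∫ y, W1 (emp N y) ν ∂(Measure.pi fun i ↦ (κ i : Measure X))
      ≤ ∫ y, (ε / 2 + ∑ f ∈ F, |∫ x, f x ∂(emp N y : Measure X) - ∫ x, f x ∂(ν : Measure X)|)
          ∂(Measure.pi fun i ↦ (κ i : Measure X)) :=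
        integral_mono hintW ((integrable_const _).add (integrable_finsetSum _ fun f _ ↦ hint f))
          fun y ↦ hF _ _
    _ = ε / 2 + ∑ f ∈ F, ∫ y, |∫ x, f x ∂(emp N y : Measure X) - ∫ x, f x ∂(ν : Measure X)|
          ∂(Measure.pi fun i ↦ (κ i : Measure X)) := by
        rw [integral_add (integrable_const _) (integrable_finsetSum _ fun f _ ↦ hint f),
          integral_finsetSum _ fun f _ ↦ hint f]
        simp
    _ ≤ ε / 2 + ∑ f ∈ F, ‖f‖ / √(N : ℝ) := by
        gcongr with f
        exact integral_abs_integral_emp_sub_le κ hN₀ ν f (hν f)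
    _ ≤ ε := by linarith

end EmpiricalLaw

section Dynamics

variable {X U : Type*} [MetricSpace X] [CompactSpace X] [MeasurableSpace X] [BorelSpace X]
  [MetricSpace U] [CompactSpace U] [MeasurableSpace U] [BorelSpace U]
  (p : C(X × U × ProbabilityMeasure X, ProbabilityMeasure X))

/-- The law of the next state of an agent in state `x` that faces the mean field `μ` and draws its
action from the decision rule `Q`, as a function of `(x, μ)`. -/
noncomputable def transition (Q : C(X × ProbabilityMeasure X, ProbabilityMeasure U)) :
    C(X × ProbabilityMeasure X, ProbabilityMeasure X) :=
  mixMap Q (p.comp ⟨fun z ↦ (z.1.1, z.2, z.1.2), by fun_prop⟩)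

/-- One step `μ_t ↦ μ_{t+1}` of the limiting mean field under the decision rule `Q`. -/
noncomputable def meanFieldStep (Q : C(X × ProbabilityMeasure X, ProbabilityMeasure U)) :
    C(ProbabilityMeasure X, ProbabilityMeasure X) :=
  mixMap (ContinuousMap.id _) ((transition p Q).comp ContinuousMap.prodSwap)

/-- The limiting mean field `μ_t` under the policy `q`, started at `μ₀`. -/
noncomputable def meanField (q : ℕ → C(X × ProbabilityMeasure X, ProbabilityMeasure U))
    (μ₀ : ProbabilityMeasure X) : ℕ → ProbabilityMeasure X
  | 0 => μ₀
  | t + 1 => meanFieldStep p (q t) (meanField q μ₀ t)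

/-- The law of the next joint state of `N` agents, as a function of their joint state: given the
latter, the agents move independently. -/
noncomputable def jointTransition [Nonempty X]
    (Q : C(X × ProbabilityMeasure X, ProbabilityMeasure U)) (N : ℕ) :
    C(Fin N → X, ProbabilityMeasure (Fin N → X)) where
  toFun x := ProbabilityMeasure.pi fun i ↦ transition p Q (x i, emp N x)
  continuous_toFun := ProbabilityMeasure.continuous_pi.comp <| continuous_pi fun i ↦
    (transition p Q).continuous.comp ((continuous_apply i).prodMk (continuous_emp N))

/-- The law of the joint state of `N` agents that use the policy `q`; this is `mfcLawN` as a
probability measure. -/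
noncomputable def agentLaw [Nonempty X]
    (q : ℕ → C(X × ProbabilityMeasure X, ProbabilityMeasure U))
    (μ₀ : ProbabilityMeasure X) (N : ℕ) : ℕ → ProbabilityMeasure (Fin N → X)
  | 0 => ProbabilityMeasure.pi fun _ ↦ μ₀
  | t + 1 => mix (agentLaw q μ₀ N t) (jointTransition p (q t) N)

/-- The discounted objective `J^N` of `N` agents that use the policy `q`. -/
noncomputable def agentObjective [Nonempty X] (r : ProbabilityMeasure X → ℝ) (γ : ℝ)
    (μ₀ : ProbabilityMeasure X) (N : ℕ)
    (q : ℕ → C(X × ProbabilityMeasure X, ProbabilityMeasure U)) : ℝ :=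
  ∑' t, γ ^ t * ∫ x, r (emp N x) ∂(agentLaw p q μ₀ N t : Measure (Fin N → X))

/-- The discounted objective `J` of the limiting mean field under the policy `q`. -/
noncomputable def meanFieldObjective (r : ProbabilityMeasure X → ℝ) (γ : ℝ)
    (μ₀ : ProbabilityMeasure X)
    (q : ℕ → C(X × ProbabilityMeasure X, ProbabilityMeasure U)) : ℝ :=
  ∑' t, γ ^ t * r (meanField p q μ₀ t)

lemma coe_agentLaw [Nonempty X] (q : ℕ → C(X × ProbabilityMeasure X, ProbabilityMeasure U))
    (μ₀ : ProbabilityMeasure X) (N t : ℕ) : (agentLaw p q μ₀ N t : Measure (Fin N → X)) =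
      mfcLawN (fun x u μ ↦ p (x, u, μ)) (fun t x μ ↦ q t (x, μ)) μ₀ N t := by
  induction t with
  | zero => rfl
  | succ t ih =>
    rw [mfcLawN, ← ih]
    rfl

lemma uniformEquicontinuous_transition {ι : Type*}
    {Q : ι → C(X × ProbabilityMeasure X, ProbabilityMeasure U)}
    (hQ : UniformEquicontinuous fun i ↦ ⇑(Q i)) :
    UniformEquicontinuous fun i ↦ ⇑(transition p (Q i)) :=
  uniformEquicontinuous_mixMap hQ (uniformEquicontinuous_const_of_continuous ι (map_continuous _))

lemma uniformEquicontinuous_meanFieldStep {ι : Type*}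
    {Q : ι → C(X × ProbabilityMeasure X, ProbabilityMeasure U)}
    (hQ : UniformEquicontinuous fun i ↦ ⇑(Q i)) :
    UniformEquicontinuous fun i ↦ ⇑(meanFieldStep p (Q i)) :=
  uniformEquicontinuous_mixMap (uniformEquicontinuous_const_of_continuous ι continuous_id)
    fun V hV ↦
    uniformContinuous_swap.eventually (uniformEquicontinuous_transition p hQ V hV)

lemma integral_meanFieldStep_emp [Nonempty X]
    (Q : C(X × ProbabilityMeasure X, ProbabilityMeasure U)) {N : ℕ} (hN : N ≠ 0) (x : Fin N → X)
    (f : X →ᵇ ℝ) :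
    ∫ y, f y ∂(meanFieldStep p Q (emp N x) : Measure X) =
      (N : ℝ)⁻¹ * ∑ i, ∫ y, f y ∂(transition p Q (x i, emp N x) : Measure X) := by
  let g : X →ᵇ ℝ := BoundedContinuousFunction.mkOfCompact
    ⟨fun x' ↦ ∫ y, f y ∂(transition p Q (x', emp N x) : Measure X),
      (ProbabilityMeasure.continuous_integral_boundedContinuousFunction f).comp <|
        (transition p Q).continuous.comp (by fun_prop)⟩
  exact (integral_mix _ _ f.continuous).trans (integral_emp hN x g)

end Dynamics

lemma exists_forall_abs_le_of_continuous {A : Type*} [TopologicalSpace A] [CompactSpace A]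
    {f : A → ℝ} (hf : Continuous f) : ∃ M, ∀ a, |f a| ≤ M :=
  (isCompact_univ.exists_bound_of_continuousOn hf.continuousOn).imp fun _ hM a ↦
    hM a (Set.mem_univ a)

lemma summable_pow_mul_of_abs_le {γ : ℝ} (hγ : |γ| < 1) {a : ℕ → ℝ} {M : ℝ}
    (ha : ∀ t, |a t| ≤ M) : Summable fun t ↦ γ ^ t * a t := by
  refine Summable.of_norm_bounded
    ((summable_geometric_of_abs_lt_one (r := |γ|) (by rwa [abs_abs])).mul_right M) fun t ↦ ?_
  rw [norm_mul, norm_pow, Real.norm_eq_abs γ]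
  gcongr
  exact ha t

section PropagationOfChaos

lemma tendsto_integral_dist_comp {ι α β : Type*} [PseudoMetricSpace α] [PseudoMetricSpace β]
    {Ω : ι → Type*} [∀ i, MeasurableSpace (Ω i)] {l : Filter ι} (P : ∀ i, Measure (Ω i))
    [∀ i, IsProbabilityMeasure (P i)] {Z : ∀ i, Ω i → α} {a : ι → α} {F : ι → α → β}
    (hF : UniformEquicontinuous F) {D : ℝ} (hD : ∀ i a b, dist (F i a) (F i b) ≤ D)
    (hint : ∀ i, Integrable (fun ω ↦ dist (Z i ω) (a i)) (P i))
    (hZ : Tendsto (fun i ↦ ∫ ω, dist (Z i ω) (a i) ∂P i) l (𝓝 0)) :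
    Tendsto (fun i ↦ ∫ ω, dist (F i (Z i ω)) (F i (a i)) ∂P i) l (𝓝 0) := by
  refine (nhds_basis_Ioo_pos (0 : ℝ)).tendsto_right_iff.2 fun ε hε ↦ ?_
  obtain ⟨C, hC⟩ := exists_affine_modulus hF hD (half_pos hε)
  have hCZ : Tendsto (fun i ↦ C * ∫ ω, dist (Z i ω) (a i) ∂P i) l (𝓝 0) := by
    simpa using hZ.const_mul (C : ℝ)
  filter_upwards [hCZ.eventually_lt_const (half_pos hε)] with i hi
  have hnonneg : 0 ≤ ∫ ω, dist (F i (Z i ω)) (F i (a i)) ∂P i :=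
    integral_nonneg fun _ ↦ dist_nonneg
  have hle : ∫ ω, dist (F i (Z i ω)) (F i (a i)) ∂P i ≤
      ∫ ω, (ε / 2 + C * dist (Z i ω) (a i)) ∂P i :=
    integral_mono_of_nonneg (Eventually.of_forall fun _ ↦ dist_nonneg)
      ((integrable_const _).add ((hint i).const_mul _)) (Eventually.of_forall fun ω ↦ hC i _ _)
  rw [integral_add (integrable_const _) ((hint i).const_mul _), integral_const_mul,
    integral_const, probReal_univ, one_smul] at hle
  exact ⟨by linarith, by linarith⟩

variable {X U : Type*} [MetricSpace X] [CompactSpace X] [MeasurableSpace X] [BorelSpace X]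
  [Nonempty X] [MetricSpace U] [CompactSpace U] [MeasurableSpace U] [BorelSpace U]
  (p : C(X × U × ProbabilityMeasure X, ProbabilityMeasure X)) {ι : Type*} {l : Filter ι} {n : ι → ℕ}
  {q : ι → ℕ → C(X × ProbabilityMeasure X, ProbabilityMeasure U)}

lemma eventually_integral_agentLaw_succ_le {ε : ℝ} (hε : 0 < ε) : ∀ᶠ N : ℕ in atTop,
    ∀ (q : ℕ → C(X × ProbabilityMeasure X, ProbabilityMeasure U)) (μ₀ ν : ProbabilityMeasure X)
      (t : ℕ), ∫ y, W1 (emp N y) ν ∂(agentLaw p q μ₀ N (t + 1) : Measure (Fin N → X)) ≤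
        ε + ∫ x, W1 (meanFieldStep p (q t) (emp N x)) ν
          ∂(agentLaw p q μ₀ N t : Measure (Fin N → X)) := by
  filter_upwards [eventually_integral_W1_emp_le (X := X) hε, eventually_ne_atTop 0]
    with N hlln hN q μ₀ ν t
  set S := meanFieldStep p (q t)
  have hdist : Continuous fun x : Fin N → X ↦ W1 (S (emp N x)) ν :=
    continuous_W1_const_right (S.continuous.comp (continuous_emp N)) ν
  have hone_step (x : Fin N → X) :
      ∫ y, W1 (emp N y) ν ∂(jointTransition p (q t) N x : Measure (Fin N → X)) ≤
        ε + W1 (S (emp N x)) ν := by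
    have hint (μ : ProbabilityMeasure X) : Integrable (fun y ↦ W1 (emp N y) μ)
        (jointTransition p (q t) N x : Measure (Fin N → X)) :=
      integrable_of_continuous _ (continuous_W1_const_right (continuous_emp N) μ)
    have htri := integral_mono (hint ν) ((hint (S (emp N x))).add (integrable_const _))
      fun y ↦ W1_triangle (emp N y) (S (emp N x)) ν
    rw [integral_add' (hint _) (integrable_const _), integral_const, probReal_univ,
      one_smul] at htri
    exact htri.trans <| by
      gcongr
      exact hlln _ _ (integral_meanFieldStep_emp p (q t) hN x)
  calc ∫ y, W1 (emp N y) ν ∂(agentLaw p q μ₀ N (t + 1) : Measure (Fin N → X))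
      = ∫ x, ∫ y, W1 (emp N y) ν ∂(jointTransition p (q t) N x : Measure (Fin N → X))
          ∂(agentLaw p q μ₀ N t : Measure (Fin N → X)) :=
        integral_mix _ _ (continuous_W1_const_right (continuous_emp N) ν)
    _ ≤ ∫ x, (ε + W1 (S (emp N x)) ν) ∂(agentLaw p q μ₀ N t : Measure (Fin N → X)) :=
        integral_mono_of_nonneg
          (Eventually.of_forall fun _ ↦ integral_nonneg fun _ ↦ W1_nonneg _ _)
          (integrable_of_continuous _ (continuous_const.add hdist))
          (Eventually.of_forall hone_step)
    _ = ε + ∫ x, W1 (S (emp N x)) ν ∂(agentLaw p q μ₀ N t : Measure (Fin N → X)) := by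
        rw [integral_add (integrable_const _) (integrable_of_continuous _ hdist)]
        simp

lemma tendsto_integral_W1_emp (hn : Tendsto n l atTop)
    (hq : ∀ t, UniformEquicontinuous fun i ↦ ⇑(q i t)) (μ₀ : ProbabilityMeasure X) (t : ℕ) :
    Tendsto (fun i ↦ ∫ x, W1 (emp (n i) x) (meanField p (q i) μ₀ t)
      ∂(agentLaw p (q i) μ₀ (n i) t : Measure (Fin (n i) → X))) l (𝓝 0) := by
  have hnonneg (i : ι) (t : ℕ) : 0 ≤ ∫ x, W1 (emp (n i) x) (meanField p (q i) μ₀ t)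
      ∂(agentLaw p (q i) μ₀ (n i) t : Measure (Fin (n i) → X)) :=
    integral_nonneg fun _ ↦ W1_nonneg _ _
  induction t with
  | zero =>
    refine (nhds_basis_Ioo_pos (0 : ℝ)).tendsto_right_iff.2 fun ε hε ↦ ?_
    filter_upwards [hn.eventually (eventually_integral_W1_emp_le (X := X) (half_pos hε)),
      hn.eventually_ne_atTop 0] with i hi hi₀
    have hzero : ∫ x, W1 (emp (n i) x) (meanField p (q i) μ₀ 0)
        ∂(agentLaw p (q i) μ₀ (n i) 0 : Measure (Fin (n i) → X)) ≤ ε / 2 :=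
      hi (fun _ ↦ μ₀) μ₀ fun f ↦ by simp [hi₀]
    exact ⟨by linarith [hnonneg i 0], by linarith⟩
  | succ t ih =>
    have hstep : Tendsto (fun i ↦ ∫ x, W1 (meanFieldStep p (q i t) (emp (n i) x))
        (meanField p (q i) μ₀ (t + 1))
        ∂(agentLaw p (q i) μ₀ (n i) t : Measure (Fin (n i) → X))) l (𝓝 0) :=
      tendsto_integral_dist_comp (fun i ↦ (agentLaw p (q i) μ₀ (n i) t : Measure _))
        (uniformEquicontinuous_meanFieldStep p (hq t)) (fun _ _ _ ↦ dist_le_diam_univ _ _)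
        (fun i ↦ integrable_of_continuous _ (continuous_W1_const_right (continuous_emp (n i)) _)) ih
    refine (nhds_basis_Ioo_pos (0 : ℝ)).tendsto_right_iff.2 fun ε hε ↦ ?_
    filter_upwards [hn.eventually (eventually_integral_agentLaw_succ_le p (half_pos hε)),
      hstep.eventually_lt_const (half_pos hε)] with i hi hsmall
    have hsucc := hi (q i) μ₀ (meanField p (q i) μ₀ (t + 1)) t
    exact ⟨by linarith [hnonneg i (t + 1)], by linarith⟩

lemma tendsto_integral_emp_sub {r : ProbabilityMeasure X → ℝ} (hr : Continuous r)
    (hn : Tendsto n l atTop) (hq : ∀ t, UniformEquicontinuous fun i ↦ ⇑(q i t))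
    (μ₀ : ProbabilityMeasure X) (t : ℕ) :
    Tendsto (fun i ↦ ∫ x, r (emp (n i) x) ∂(agentLaw p (q i) μ₀ (n i) t : Measure _) -
      r (meanField p (q i) μ₀ t)) l (𝓝 0) := by
  obtain ⟨M, hM⟩ := exists_forall_abs_le_of_continuous hr
  have hintW (i : ι) : Integrable (fun x ↦ W1 (emp (n i) x) (meanField p (q i) μ₀ t))
      (agentLaw p (q i) μ₀ (n i) t : Measure (Fin (n i) → X)) :=
    integrable_of_continuous _ (continuous_W1_const_right (continuous_emp (n i)) _)
  have hdist : Tendsto (fun i ↦ ∫ x, dist (r (emp (n i) x)) (r (meanField p (q i) μ₀ t))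
      ∂(agentLaw p (q i) μ₀ (n i) t : Measure _)) l (𝓝 0) :=
    tendsto_integral_dist_comp (fun i ↦ (agentLaw p (q i) μ₀ (n i) t : Measure _))
      (Z := fun i ↦ emp (n i)) (a := fun i ↦ meanField p (q i) μ₀ t)
      (uniformEquicontinuous_const_of_continuous ι hr)
      (fun _ μ ν ↦ (dist_le_norm_add_norm _ _).trans (add_le_add (hM μ) (hM ν)))
      hintW (tendsto_integral_W1_emp p hn hq μ₀ t)
  refine squeeze_zero_norm (fun i ↦ ?_) hdist
  have hint : Integrable (fun x ↦ r (emp (n i) x))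
      (agentLaw p (q i) μ₀ (n i) t : Measure (Fin (n i) → X)) :=
    integrable_of_continuous _ (hr.comp (continuous_emp (n i)))
  have hsub := integral_sub hint (integrable_const (r (meanField p (q i) μ₀ t)))
  rw [integral_const, probReal_univ, one_smul] at hsub
  rw [← hsub]
  exact norm_integral_le_integral_norm _

theorem tendsto_agentObjective_sub_meanFieldObjective {r : ProbabilityMeasure X → ℝ}
    (hr : Continuous r) {γ : ℝ} (hγ : |γ| < 1) (hn : Tendsto n l atTop)
    (hq : ∀ t, UniformEquicontinuous fun i ↦ ⇑(q i t)) (μ₀ : ProbabilityMeasure X) :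
    Tendsto (fun i ↦ agentObjective p r γ μ₀ (n i) (q i) - meanFieldObjective p r γ μ₀ (q i))
      l (𝓝 0) := by
  obtain ⟨M, hM⟩ := exists_forall_abs_le_of_continuous hr
  have hM_agents (i : ι) (t : ℕ) :
      |∫ x, r (emp (n i) x) ∂(agentLaw p (q i) μ₀ (n i) t : Measure (Fin (n i) → X))| ≤ M := by
    simpa using norm_integral_le_of_norm_le_const (f := fun x ↦ r (emp (n i) x))
      (μ := (agentLaw p (q i) μ₀ (n i) t : Measure (Fin (n i) → X)))
      (Eventually.of_forall fun x ↦ hM (emp (n i) x))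
  have hdiff (i : ι) :
      agentObjective p r γ μ₀ (n i) (q i) - meanFieldObjective p r γ μ₀ (q i) =
        ∑' t, γ ^ t * (∫ x, r (emp (n i) x) ∂(agentLaw p (q i) μ₀ (n i) t : Measure _) -
          r (meanField p (q i) μ₀ t)) := by
    simp only [mul_sub]
    exact ((summable_pow_mul_of_abs_le hγ (hM_agents i)).tsum_sub
      (summable_pow_mul_of_abs_le hγ fun t ↦ hM _)).symm
  have hterm (t : ℕ) : Tendsto (fun i ↦ γ ^ t *
      (∫ x, r (emp (n i) x) ∂(agentLaw p (q i) μ₀ (n i) t : Measure _) -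
        r (meanField p (q i) μ₀ t))) l (𝓝 0) := by
    simpa using (tendsto_integral_emp_sub p hr hn hq μ₀ t).const_mul (γ ^ t)
  have hbound (i : ι) (t : ℕ) : ‖γ ^ t *
      (∫ x, r (emp (n i) x) ∂(agentLaw p (q i) μ₀ (n i) t : Measure _) -
        r (meanField p (q i) μ₀ t))‖ ≤ |γ| ^ t * (M + M) := by
    rw [norm_mul, norm_pow]
    gcongr
    · exact le_rfl
    · exact (norm_sub_le _ _).trans (add_le_add (hM_agents i t) (hM _))
  simp only [hdiff]
  simpa using tendsto_tsum_of_dominated_convergence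
    ((summable_geometric_of_abs_lt_one (by rwa [abs_abs])).mul_right (M + M)) hterm
    (Eventually.of_forall hbound)

end PropagationOfChaos

section PolicyClass

variable {X U : Type*} [MetricSpace X] [CompactSpace X] [MeasurableSpace X] [BorelSpace X]
  [MetricSpace U] [CompactSpace U] [MeasurableSpace U] [BorelSpace U] {ι : Type*}
  (p : C(X × U × ProbabilityMeasure X, ProbabilityMeasure X))

theorem tendstoUniformly_agentObjective [Nonempty X] {r : ProbabilityMeasure X → ℝ}
    (hr : Continuous r) {γ : ℝ} (hγ : |γ| < 1)
    {q : ι → ℕ → C(X × ProbabilityMeasure X, ProbabilityMeasure U)}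
    (hq : ∀ t, UniformEquicontinuous fun i ↦ ⇑(q i t)) (μ₀ : ProbabilityMeasure X) :
    TendstoUniformly (fun N i ↦ agentObjective p r γ μ₀ N (q i))
      (fun i ↦ meanFieldObjective p r γ μ₀ (q i)) atTop := by
  -- Uniform convergence over `ι` is convergence of the differences along `atTop ×ˢ 𝓟 univ`.
  have hlim := tendsto_agentObjective_sub_meanFieldObjective p hr hγ
    (q := fun j : ℕ × ι ↦ q j.2) (l := atTop ×ˢ 𝓟 Set.univ) tendsto_fst
    (fun t ↦ (hq t).comp Prod.snd) μ₀
  refine Metric.tendstoUniformly_iff.2 fun ε hε ↦ ?_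
  filter_upwards [eventually_prod_principal_iff.1 (Metric.tendsto_nhds.1 hlim ε hε)] with N hN i
  simpa [dist_comm, Real.dist_eq] using hN i (Set.mem_univ i)

lemma eq_meanField {q : ℕ → C(X × ProbabilityMeasure X, ProbabilityMeasure U)}
    {μ : ℕ → ProbabilityMeasure X}
    (hμ : ∀ t, (μ (t + 1) : Measure X) = (μ t : Measure X).bind fun x ↦
      (q t (x, μ t) : Measure U).bind fun u ↦ (p (x, u, μ t) : Measure X)) (t : ℕ) :
    μ t = meanField p q (μ 0) t := by
  induction t with
  | zero => rfl
  | succ t ih =>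
    rw [meanField, ← ih]
    exact Subtype.ext (hμ t)

end PolicyClass

end MeanField

theorem statement11_general {X U : Type*}
    [MetricSpace X] [CompactSpace X] [MeasurableSpace X] [BorelSpace X] [Nonempty X]
    [MetricSpace U] [CompactSpace U] [MeasurableSpace U] [BorelSpace U]
    (p : X → U → ProbabilityMeasure X → ProbabilityMeasure X)
    (hp : Continuous fun z : X × U × ProbabilityMeasure X => p z.1 z.2.1 z.2.2)
    (r : ProbabilityMeasure X → ℝ) (hr : Continuous r) (γ : ℝ) (hγ : |γ| < 1)
    (Pi : Set (ℕ → X → ProbabilityMeasure X → ProbabilityMeasure U))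
    (hPi : ∀ t, ∀ ε > 0, ∃ δ > 0, ∀ π ∈ Pi, ∀ x x' μ μ', dist x x' < δ → W1 μ μ' < δ →
      W1 (π t x μ) (π t x' μ') < ε)
    (μ0 : ProbabilityMeasure X)
    (mf : (ℕ → X → ProbabilityMeasure X → ProbabilityMeasure U) → ℕ → ProbabilityMeasure X)
    (hmf0 : ∀ q ∈ Pi, mf q 0 = μ0)
    (hmf : ∀ q ∈ Pi, ∀ t : ℕ,
      (mf q (t + 1) : Measure X) = (mf q t : Measure X).bind fun x =>
        ((q t x (mf q t) : Measure U)).bind fun u => (p x u (mf q t) : Measure X)) :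
    ∀ ε > (0 : ℝ), ∃ N0 : ℕ, ∀ N ≥ N0, ∀ q ∈ Pi,
      |(∑' t : ℕ, γ ^ t * ∫ x, r (emp N x) ∂(mfcLawN p q μ0 N t))
        - ∑' t : ℕ, γ ^ t * r (mf q t)| ≤ ε := by
  intro ε hε
  let := MeanField.wassersteinPseudoMetric (X := X)
  let := MeanField.wassersteinPseudoMetric (X := U)
  have hequi (t : ℕ) := MeanField.uniformEquicontinuous_of_forall_W1_lt
    (Q := fun (q : Pi) (z : X × ProbabilityMeasure X) ↦ q.1 t z.1 z.2) fun ε hε ↦ by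
      obtain ⟨δ, hδ, hPiδ⟩ := hPi t ε hε
      exact ⟨δ, hδ, fun q ↦ hPiδ q q.2⟩
  let p' : C(X × U × ProbabilityMeasure X, ProbabilityMeasure X) := ⟨_, hp⟩
  let q' (q : Pi) (t : ℕ) : C(X × ProbabilityMeasure X, ProbabilityMeasure U) :=
    ⟨_, (hequi t).equicontinuous.continuous q⟩
  have hmf' (q : Pi) (t : ℕ) : mf q t = MeanField.meanField p' (q' q) μ0 t :=
    hmf0 q q.2 ▸ MeanField.eq_meanField p' (q := q' q) (hmf q q.2) t
  obtain ⟨N0, hN0⟩ := Filter.eventually_atTop.1 <| Metric.tendstoUniformly_iff.1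
    (MeanField.tendstoUniformly_agentObjective p' hr hγ (q := q') hequi μ0) ε hε
  refine ⟨N0, fun N hN q hq ↦ ?_⟩
  have hclose := hN0 N hN ⟨q, hq⟩
  rw [dist_comm, Real.dist_eq, MeanField.agentObjective, MeanField.meanFieldObjective] at hclose
  simp only [MeanField.coe_agentLaw, ← hmf'] at hclose
  exact hclose.le

/-- uniform convergence of objectives for deterministic MFC. With compact
`𝒳`, `𝒰`, continuous `p` and `r`, `γ ∈ (0,1)`, and an equi-Lipschitz policy class `Π`, the
`N`-agent objective `J^N(π) = E[Σ_t γ^t r(μ_t^N)]` converges to the limiting MFC objective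
`J(Φ⁻¹(π)) = Σ_t γ^t r(μ_t)`, uniformly over `π ∈ Π`. -/
theorem statement11 {X U : Type*}
    [MetricSpace X] [CompactSpace X] [MeasurableSpace X] [BorelSpace X] [Nonempty X]
    [MetricSpace U] [CompactSpace U] [MeasurableSpace U] [BorelSpace U]
    (p : X → U → ProbabilityMeasure X → ProbabilityMeasure X)
    (hp : Continuous fun z : X × U × ProbabilityMeasure X => p z.1 z.2.1 z.2.2)
    (r : ProbabilityMeasure X → ℝ) (hr : Continuous r)
    (γ : ℝ) (hγ0 : 0 < γ) (hγ1 : γ < 1)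
    (L : ℝ) (hL : 0 < L)
    (Pi : Set (ℕ → X → ProbabilityMeasure X → ProbabilityMeasure U))
    (hPi : ∀ π ∈ Pi, ∀ (t : ℕ) (x x' : X) (μ μ' : ProbabilityMeasure X) (g : U → ℝ),
      LipschitzWith 1 g →
      |∫ u, g u ∂(π t x μ : Measure U) - ∫ u, g u ∂(π t x' μ' : Measure U)|
        ≤ L * (dist x x' + W1 μ μ'))
    (μ0 : ProbabilityMeasure X)
    (mf : (ℕ → X → ProbabilityMeasure X → ProbabilityMeasure U) → ℕ → ProbabilityMeasure X)
    (hmf0 : ∀ q, mf q 0 = μ0)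
    (hmf : ∀ q ∈ Pi, ∀ t : ℕ,
      (mf q (t + 1) : Measure X) = (mf q t : Measure X).bind fun x =>
        ((q t x (mf q t) : Measure U)).bind fun u => (p x u (mf q t) : Measure X)) :
    ∀ ε > (0 : ℝ), ∃ N0 : ℕ, ∀ N ≥ N0, ∀ q ∈ Pi,
      |(∑' t : ℕ, γ ^ t * ∫ x, r (emp N x) ∂(mfcLawN p q μ0 N t))
        - ∑' t : ℕ, γ ^ t * r (mf q t)| ≤ ε :=
  statement11_general p hp r hr γ (by rwa [abs_of_pos hγ0]) Pi
    (fun t ε hε ↦ ⟨ε / (2 * L), by positivity, fun π hπ x x' μ μ' ↦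
      MeanField.W1_lt_of_dist_lt_of_W1_lt hL (hPi π hπ t x x' μ μ')⟩) μ0 mf (fun q _ ↦ hmf0 q) hmf
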